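/- arXiv:1801.08461 — 3 statements merged into one kernel-verified Lean document; each statement's English description precedes it below -/
import Mathlib

section
/- Let M ⊂ ℝ^d be a compact C² manifold, φ a flow on M with C¹ velocity field X, and Λ ⊂ M a compact φ-invariant subset whose fixed points are all dynamically isolated. If φ|Λ is rescaling expansive then the following property (*) holds: for all β > 0 there is δ > 0 such that if x, y ∈ Λ, h ∈ H⁺₀(ℝ) and dist(φ_t(x), φ_{h(t)}(y)) ≤ δ‖X(φ_t(x))‖ for all t ∈ ℝ, then there is g ∈ H⁺(ℝ) such that φ_{h(t)}(y) = φ_{g(t)}(x) for all t ∈ ℝ and diam(φ_{[t,g(t)]}(x)) < β for all t ∈ ℝ. Conversely, if φ|Λ is efficient and satisfies (*), then φ|Λ is rescaling expansive. -/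
open Metric Set Function

noncomputable section

/-- The set of increasing homeomorphisms of `ℝ`, viewed as continuous strictly
increasing surjections `ℝ → ℝ`. -/
def IsHplus (h : ℝ → ℝ) : Prop :=
  Continuous h ∧ StrictMono h ∧ Function.Surjective h

/-- Increasing homeomorphisms of `ℝ` fixing `0`. -/
def IsHplus0 (h : ℝ → ℝ) : Prop := IsHplus h ∧ h 0 = 0

/-- The orbit `φ_ℝ(x)` of a point under a flow. -/
def orb {α : Type*} (φ : ℝ → α → α) (x : α) : Set α := Set.range fun t => φ t x

/-- The orbit segment `φ_{[a,b]}(x)` (where `[a,b]` is the closed interval between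
`a` and `b`, also when `a > b`). -/
def arc {α : Type*} (φ : ℝ → α → α) (x : α) (a b : ℝ) : Set α :=
  (fun t => φ t x) '' Set.uIcc a b

abbrev Euc (d : ℕ) := EuclideanSpace ℝ (Fin d)

/-- A flow on a subset `M` of a topological space: continuous on `ℝ × M`, maps `M`
to itself, `φ_0 = id` and `φ_{s+t} = φ_s ∘ φ_t` on `M`. -/
def FlowOn {α : Type*} [TopologicalSpace α] (φ : ℝ → α → α) (M : Set α) : Prop :=
  ContinuousOn (fun p : ℝ × α => φ p.1 p.2) (Set.univ ×ˢ M) ∧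
  (∀ t : ℝ, Set.MapsTo (φ t) M M) ∧ (∀ x ∈ M, φ 0 x = x) ∧
  ∀ s t : ℝ, ∀ x ∈ M, φ (s + t) x = φ s (φ t x)

/-- The fixed points of the flow lying in `M`. -/
def fixOn {α : Type*} (φ : ℝ → α → α) (M : Set α) : Set α :=
  {σ ∈ M | ∀ t : ℝ, φ t σ = σ}

/-- `φ|Λ` is rescaling expansive (with velocity field `X`): for all `ε > 0` there is
`δ > 0` such that if `x, y ∈ Λ`, `h ∈ H⁺₀(ℝ)` and
`dist (φ_t x) (φ_{h t} y) ≤ δ‖X (φ_t x)‖` for all `t`, then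
`φ_{h t} y ∈ φ_{[-ε,ε]} (φ_t x)` for all `t`. -/
def RescalingExpansive {d : ℕ} (φ : ℝ → Euc d → Euc d) (X : Euc d → Euc d)
    (Λ : Set (Euc d)) : Prop :=
  ∀ ε > (0 : ℝ), ∃ δ > (0 : ℝ), ∀ x ∈ Λ, ∀ y ∈ Λ, ∀ h : ℝ → ℝ, IsHplus0 h →
    (∀ t : ℝ, dist (φ t x) (φ (h t) y) ≤ δ * ‖X (φ t x)‖) →
    ∀ t : ℝ, φ (h t) y ∈ arc φ (φ t x) (-ε) ε

/-- `φ|Λ` is efficient: there is `δ* > 0` such that whenever `0 < δ < δ*`,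
`x ∈ Λ \ fix(φ)`, `g ∈ H⁺(ℝ)`, `dist (φ_t x) (φ_{g t} x) < δ‖X (φ_t x)‖` for all `t`
and `diam (φ_{[t, g t]} x) < δ*` for all `t`, then
`φ_{[t, g t]} x ⊆ B(φ_t x, δ‖X (φ_t x)‖)` for all `t`. -/
def Efficient {d : ℕ} (φ : ℝ → Euc d → Euc d) (X : Euc d → Euc d)
    (Λ : Set (Euc d)) : Prop :=
  ∃ δs > (0 : ℝ), ∀ δ : ℝ, 0 < δ → δ < δs → ∀ x ∈ Λ, (¬ ∀ t : ℝ, φ t x = x) →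
    ∀ g : ℝ → ℝ, IsHplus g →
    (∀ t : ℝ, dist (φ t x) (φ (g t) x) < δ * ‖X (φ t x)‖) →
    (∀ t : ℝ, Metric.diam (arc φ x t (g t)) < δs) →
    ∀ t : ℝ, arc φ x t (g t) ⊆ Metric.ball (φ t x) (δ * ‖X (φ t x)‖)

/-- A fixed point `σ` of the flow `φ` on `M` is dynamically isolated: there is
`r > 0` such that the only point of `M` whose whole orbit stays in `B(σ, r)` is
`σ` itself. -/
def DynIsolated {α : Type*} [MetricSpace α] (φ : ℝ → α → α) (M : Set α) (σ : α) : Prop :=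
  ∃ r > (0 : ℝ), ∀ x ∈ M, orb φ x ⊆ Metric.ball σ r → x = σ

/-- Property (*): for all `β > 0` there is `δ > 0` such that if `x, y ∈ Λ`,
`h ∈ H⁺₀(ℝ)` and `dist (φ_t x) (φ_{h t} y) ≤ δ‖X (φ_t x)‖` for all `t`, then there
is `g ∈ H⁺(ℝ)` with `φ_{h t} y = φ_{g t} x` and `diam (φ_{[t, g t]} x) < β` for
all `t`. -/
def StarProperty {d : ℕ} (φ : ℝ → Euc d → Euc d) (X : Euc d → Euc d)
    (Λ : Set (Euc d)) : Prop :=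
  ∀ β > (0 : ℝ), ∃ δ > (0 : ℝ), ∀ x ∈ Λ, ∀ y ∈ Λ, ∀ h : ℝ → ℝ, IsHplus0 h →
    (∀ t : ℝ, dist (φ t x) (φ (h t) y) ≤ δ * ‖X (φ t x)‖) →
    ∃ g : ℝ → ℝ, IsHplus g ∧ (∀ t : ℝ, φ (h t) y = φ (g t) x) ∧
      ∀ t : ℝ, Metric.diam (arc φ x t (g t)) < β

/-!
Both implications compare the time shift `g t - t` with the displacement along the orbit of `x`.
Since `X` is `K`-Lipschitz on `Λ`, an integral curve stays close to its tangent line while the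
elapsed time is at most `1 / (3 * K)`, so during that time it moves at least at half its initial
speed, a bound that scales with `‖X‖` exactly as the hypotheses do. Hence regular orbits are
injective at this time scale, and an orbit segment contained in `B(φ_t x, δ‖X (φ_t x)‖)` lasts less
than `2 * δ`. A continuity argument turns both facts into a bound on `|g t - t|` for all `t`. The
speed bound on `Λ` then controls the diameter of `φ_{[t, g t]} x`.
-/

section IntegralCurve

variable {E : Type*} [NormedAddCommGroup E] [NormedSpace ℝ E] {X : E → E} {s : Set E}
  {K : NNReal} {γ : ℝ → E} {a b : ℝ}

theorem diam_image_uIcc_le_of_norm_velocity_le {C : ℝ}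
    (hγ : IsIntegralCurveOn γ (fun _ => X) (uIcc a b)) (hC : ∀ t ∈ uIcc a b, ‖X (γ t)‖ ≤ C) :
    diam (γ '' uIcc a b) ≤ C * |b - a| := by
  have hC₀ : 0 ≤ C := (norm_nonneg _).trans (hC a left_mem_uIcc)
  refine diam_le_of_forall_dist_le (mul_nonneg hC₀ (abs_nonneg _)) ?_
  rintro _ ⟨t, ht, rfl⟩ _ ⟨u, hu, rfl⟩
  calc dist (γ t) (γ u)
      = ‖γ u - γ t‖ := dist_eq_norm' _ _
    _ ≤ C * |u - t| := (convex_uIcc a b).norm_image_sub_le_of_norm_hasDerivWithin_le hγ hC ht hu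
    _ ≤ C * |b - a| := mul_le_mul_of_nonneg_left
        (abs_sub_le_of_uIcc_subset_uIcc (uIcc_subset_uIcc ht hu)) hC₀

theorem norm_velocity_sub_le_half (hX : LipschitzOnWith K X s)
    (hγ : IsIntegralCurveOn γ (fun _ => X) (uIcc a b)) (hγs : MapsTo γ (uIcc a b) s)
    (hK : K * |b - a| ≤ 1 / 3) {t : ℝ} (ht : t ∈ uIcc a b) :
    ‖X (γ t) - X (γ a)‖ ≤ ‖X (γ a)‖ / 2 := by
  have ha : a ∈ uIcc a b := left_mem_uIcc
  obtain ⟨u, hu, hmax⟩ := isCompact_uIcc.exists_isMaxOn ⟨a, ha⟩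
    ((hX.continuousOn.comp hγ.continuousOn hγs).sub continuousOn_const).norm
  replace hmax : ∀ t ∈ uIcc a b, ‖X (γ t) - X (γ a)‖ ≤ ‖X (γ u) - X (γ a)‖ := hmax
  set m := ‖X (γ u) - X (γ a)‖
  have speed_le : ∀ t ∈ uIcc a b, ‖X (γ t)‖ ≤ ‖X (γ a)‖ + m := fun t ht =>
    (norm_le_insert' _ _).trans (by gcongr; exact hmax t ht)
  have displacement_le : ‖γ u - γ a‖ ≤ (‖X (γ a)‖ + m) * |b - a| :=
    ((convex_uIcc a b).norm_image_sub_le_of_norm_hasDerivWithin_le hγ speed_le ha hu).trans <| by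
      gcongr
      exact abs_sub_left_of_mem_uIcc hu
  have m_le : m ≤ 1 / 3 * (‖X (γ a)‖ + m) :=
    calc m ≤ K * ‖γ u - γ a‖ := hX.norm_sub_le (hγs hu) (hγs ha)
      _ ≤ K * ((‖X (γ a)‖ + m) * |b - a|) := by gcongr
      _ = K * |b - a| * (‖X (γ a)‖ + m) := by ring
      _ ≤ 1 / 3 * (‖X (γ a)‖ + m) := by gcongr
  exact (hmax t ht).trans (by linarith)

theorem half_abs_sub_mul_norm_velocity_le_dist (hX : LipschitzOnWith K X s)
    (hγ : IsIntegralCurveOn γ (fun _ => X) (uIcc a b)) (hγs : MapsTo γ (uIcc a b) s)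
    (hK : K * |b - a| ≤ 1 / 3) : |b - a| / 2 * ‖X (γ a)‖ ≤ dist (γ b) (γ a) := by
  have deviation_deriv : ∀ t ∈ uIcc a b,
      HasDerivWithinAt (fun t => γ t - t • X (γ a)) (X (γ t) - X (γ a)) (uIcc a b) t :=
    fun t ht => by
      simpa only [id, one_smul] using
        (hγ t ht).fun_sub ((hasDerivWithinAt_id t _).smul_const (X (γ a)))
  have deviation_le := (convex_uIcc a b).norm_image_sub_le_of_norm_hasDerivWithin_le
    deviation_deriv (fun t ht => norm_velocity_sub_le_half hX hγ hγs hK ht) left_mem_uIcc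
    right_mem_uIcc
  have deviation_eq : γ b - b • X (γ a) - (γ a - a • X (γ a)) = γ b - γ a - (b - a) • X (γ a) := by
    module
  have triangle := norm_le_insert (γ b - γ a) ((b - a) • X (γ a))
  rw [deviation_eq, Real.norm_eq_abs] at deviation_le
  rw [norm_smul, Real.norm_eq_abs] at triangle
  rw [dist_eq_norm]
  linarith

theorem abs_sub_lt_of_image_subset_ball (hX : LipschitzOnWith K X s)
    (hγ : IsIntegralCurveOn γ (fun _ => X) (uIcc a b)) (hγs : MapsTo γ (uIcc a b) s) {r : ℝ}
    (hr : 0 < r) (hKr : K * r ≤ 1 / 3)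
    (hball : γ '' uIcc a b ⊆ ball (γ a) (r / 2 * ‖X (γ a)‖)) : |b - a| < r := by
  refine isPreconnected_uIcc.gt_of_ne (f := fun t => |t - a|) (by fun_prop) ?_
    ⟨a, left_mem_uIcc, by simpa using hr⟩ right_mem_uIcc
  -- At elapsed time exactly `r` the curve would have left the ball.
  intro t ht hta
  have hsub : uIcc a t ⊆ uIcc a b := uIcc_subset_uIcc_left ht
  have hfar := half_abs_sub_mul_norm_velocity_le_dist hX (hγ.mono hsub) (hγs.mono_left hsub)
    (hta.symm ▸ hKr)
  rw [hta] at hfar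
  exact hfar.not_gt (hball (mem_image_of_mem γ ht))

theorem eq_of_velocity_eq_zero (hX : LipschitzOnWith K X s) (hγ : IsIntegralCurve γ fun _ => X)
    (hγs : ∀ t, γ t ∈ s) (ha : X (γ a) = 0) (t : ℝ) : γ t = γ a :=
  congrFun (ODE_solution_unique_univ (v := fun _ => X) (fun _ => hX) (fun u => ⟨hγ u, hγs u⟩)
    (fun u => ⟨isIntegralCurve_const (fun _ => ha) u, hγs a⟩) (t₀ := a) rfl) t

end IntegralCurve

theorem mem_arc_neg_self {α : Type*} {φ : ℝ → α → α} {x y : α} {r : ℝ} (hr : 0 ≤ r) :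
    y ∈ arc φ x (-r) r ↔ ∃ s, |s| ≤ r ∧ φ s x = y := by
  simp only [arc, mem_image, uIcc_of_le (neg_le_self hr), mem_Icc, abs_le]

theorem isHplus_id : IsHplus id := ⟨continuous_id, strictMono_id, surjective_id⟩

theorem IsHplus.add_const {h : ℝ → ℝ} (hh : IsHplus h) (c : ℝ) : IsHplus fun t => h t + c :=
  ⟨hh.1.add continuous_const, hh.2.1.add_const c, (add_right_surjective c).comp hh.2.2⟩

theorem eventually_nhdsGT_zero_mul_lt (c : ℝ) {a : ℝ} (ha : 0 < a) :
    ∀ᶠ r in nhdsWithin (0 : ℝ) (Ioi 0), c * r < a :=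
  (((continuous_const_mul c).tendsto' 0 0 (mul_zero c)).eventually_lt_const ha).filter_mono
    nhdsWithin_le_nhds

namespace FlowOn

section Basic

variable {α : Type*} [TopologicalSpace α] {φ : ℝ → α → α} {M Λ : Set α} {x : α}

theorem mapsTo (hφ : FlowOn φ M) (t : ℝ) : MapsTo (φ t) M M := hφ.2.1 t

theorem map_zero_apply (hφ : FlowOn φ M) (hx : x ∈ M) : φ 0 x = x := hφ.2.2.1 x hx

theorem map_add_apply (hφ : FlowOn φ M) (s t : ℝ) (hx : x ∈ M) : φ (s + t) x = φ s (φ t x) :=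
  hφ.2.2.2 s t x hx

theorem mono (hφ : FlowOn φ M) (hΛM : Λ ⊆ M) (hΛ : ∀ t, MapsTo (φ t) Λ Λ) : FlowOn φ Λ :=
  ⟨hφ.1.mono (prod_mono_right hΛM), hΛ, fun _ hx => hφ.map_zero_apply (hΛM hx),
    fun s t _ hx => hφ.map_add_apply s t (hΛM hx)⟩

end Basic

section Velocity

variable {E : Type*} [NormedAddCommGroup E] [NormedSpace ℝ E] {φ : ℝ → E → E} {X : E → E}
  {Λ : Set E} {K : NNReal} {x : E}

theorem velocity_eq_zero_iff (hφ : FlowOn φ Λ)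
    (hvel : ∀ x ∈ Λ, IsIntegralCurve (φ · x) fun _ => X) (hX : LipschitzOnWith K X Λ)
    (hx : x ∈ Λ) : X x = 0 ↔ ∀ t, φ t x = x := by
  have h₀ := hφ.map_zero_apply hx
  refine ⟨fun hXx t => ?_, fun hfix => ?_⟩
  · have hXx₀ : X (φ 0 x) = 0 := by rwa [h₀]
    exact (eq_of_velocity_eq_zero hX (hvel x hx) (fun t => hφ.mapsTo t hx) hXx₀ t).trans h₀
  · have hderiv := hvel x hx 0
    simp only [hfix] at hderiv
    exact hderiv.unique (hasDerivAt_const 0 x)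

theorem velocity_ne_zero (hφ : FlowOn φ Λ) (hvel : ∀ x ∈ Λ, IsIntegralCurve (φ · x) fun _ => X)
    (hX : LipschitzOnWith K X Λ) (hx : x ∈ Λ) (hXx : X x ≠ 0) (t : ℝ) : X (φ t x) ≠ 0 := by
  intro ht
  have hconst := eq_of_velocity_eq_zero hX (hvel x hx) (fun t => hφ.mapsTo t hx) ht 0
  exact hXx (((hφ.map_zero_apply hx).symm.trans hconst) ▸ ht)

theorem eq_of_apply_eq (hφ : FlowOn φ Λ) (hvel : ∀ x ∈ Λ, IsIntegralCurve (φ · x) fun _ => X)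
    (hX : LipschitzOnWith K X Λ) (hx : x ∈ Λ) (hXx : X x ≠ 0) {a b : ℝ}
    (hK : K * |b - a| ≤ 1 / 3) (heq : φ b x = φ a x) : b = a := by
  have hdist := half_abs_sub_mul_norm_velocity_le_dist hX ((hvel x hx).isIntegralCurveOn _)
    (fun t _ => hφ.mapsTo t hx) hK
  rw [heq, dist_self] at hdist
  have hspeed : 0 < ‖X (φ a x)‖ := norm_pos_iff.2 (hφ.velocity_ne_zero hvel hX hx hXx a)
  have hhalf : |b - a| / 2 ≤ 0 := nonpos_of_mul_nonpos_left hdist hspeed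
  exact sub_eq_zero.1 (abs_nonpos_iff.1 (by linarith))

theorem abs_sub_lt_of_mem_arc (hφ : FlowOn φ Λ)
    (hvel : ∀ x ∈ Λ, IsIntegralCurve (φ · x) fun _ => X) (hX : LipschitzOnWith K X Λ)
    (hx : x ∈ Λ) (hXx : X x ≠ 0) {ε : ℝ} (hε : 0 < ε) (hKε : K * (3 * ε) ≤ 1 / 3) {g : ℝ → ℝ}
    (hg : Continuous g) (hg₀ : |g 0| < 2 * ε)
    (harc : ∀ t, φ (g t) x ∈ arc φ (φ t x) (-ε) ε) (t : ℝ) : |g t - t| < 2 * ε := by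
  refine isPreconnected_univ.gt_of_ne (f := fun t => |g t - t|) (by fun_prop) ?_
    ⟨0, mem_univ 0, by simpa using hg₀⟩ (mem_univ t)
  -- If `|g t - t| = 2 * ε`, short-time injectivity forces `|g t - t| ≤ ε`.
  intro t _ (ht : |g t - t| = 2 * ε)
  obtain ⟨s, hs, hst⟩ := (mem_arc_neg_self hε.le).1 (harc t)
  rw [← hφ.map_add_apply s t hx] at hst
  have hshort : K * |g t - (s + t)| ≤ 1 / 3 :=
    calc K * |g t - (s + t)| = K * |(g t - t) - s| := by ring_nf
      _ ≤ K * (|g t - t| + |s|) := by gcongr; exact abs_sub _ _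
      _ ≤ K * (3 * ε) := by gcongr; linarith
      _ ≤ 1 / 3 := hKε
  have hg_eq : g t = s + t := hφ.eq_of_apply_eq hvel hX hx hXx hshort hst.symm
  rw [hg_eq, add_sub_cancel_right] at ht
  linarith

end Velocity

section Expansiveness

variable {d : ℕ} {φ : ℝ → Euc d → Euc d} {X : Euc d → Euc d} {Λ : Set (Euc d)} {K : NNReal}

theorem starProperty_of_rescalingExpansive (hφ : FlowOn φ Λ)
    (hvel : ∀ x ∈ Λ, IsIntegralCurve (φ · x) fun _ => X) (hX : LipschitzOnWith K X Λ)
    (hXΛ : Bornology.IsBounded (X '' Λ)) (hexp : RescalingExpansive φ X Λ) :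
    StarProperty φ X Λ := by
  intro β hβ
  obtain ⟨C, hC, hXC⟩ := hXΛ.exists_pos_norm_le
  obtain ⟨ε, ⟨hKε, hCε⟩, hε : 0 < ε⟩ :=
    (((eventually_nhdsGT_zero_mul_lt (K * 3) (by norm_num : (0 : ℝ) < 1 / 3)).and
      (eventually_nhdsGT_zero_mul_lt (C * 2) hβ)).and self_mem_nhdsWithin).exists
  rw [mul_assoc] at hKε hCε
  obtain ⟨δ, hδ, hexp⟩ := hexp ε hε
  refine ⟨δ, hδ, fun x hx y hy h hh hd => ?_⟩
  have harc := hexp x hx y hy h hh hd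
  by_cases hXx : X x = 0
  · have hfix := (hφ.velocity_eq_zero_iff hvel hX hx).1 hXx
    have hxy : ∀ t, dist (φ t x) (φ (h t) y) ≤ 0 := by
      simpa only [hfix, hXx, norm_zero, mul_zero] using hd
    exact ⟨id, isHplus_id, fun t => (dist_le_zero.1 (hxy t)).symm, fun t => by simpa [arc] using hβ⟩
  · obtain ⟨c, hc, rfl⟩ : ∃ c, |c| ≤ ε ∧ φ c x = y := by
      simpa only [mem_arc_neg_self hε.le, hh.2, hφ.map_zero_apply hx, hφ.map_zero_apply hy]
        using harc 0
    simp only [← hφ.map_add_apply _ _ hx] at harc ⊢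
    have hshift := hφ.abs_sub_lt_of_mem_arc hvel hX hx hXx hε hKε.le (hh.1.add_const c).1
      (by rw [hh.2, zero_add]; linarith) harc
    refine ⟨fun t => h t + c, hh.1.add_const c, fun _ => rfl, fun t => ?_⟩
    calc diam (arc φ x t (h t + c))
        ≤ C * |h t + c - t| :=
          diam_image_uIcc_le_of_norm_velocity_le ((hvel x hx).isIntegralCurveOn _)
            fun s _ => hXC _ (mem_image_of_mem X (hφ.mapsTo s hx))
      _ ≤ C * (2 * ε) := by gcongr; exact (hshift t).le
      _ < β := hCε

theorem rescalingExpansive_of_efficient_of_starProperty (hφ : FlowOn φ Λ)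
    (hvel : ∀ x ∈ Λ, IsIntegralCurve (φ · x) fun _ => X) (hX : LipschitzOnWith K X Λ)
    (heff : Efficient φ X Λ) (hstar : StarProperty φ X Λ) : RescalingExpansive φ X Λ := by
  intro ε hε
  obtain ⟨δs, hδs, heff⟩ := heff
  obtain ⟨δ, hδ, hstar⟩ := hstar δs hδs
  obtain ⟨r, ⟨⟨hKr, hrδs⟩, hr : 0 < r, hrε⟩⟩ :=
    (((eventually_nhdsGT_zero_mul_lt K (by norm_num : (0 : ℝ) < 1 / 3)).and
      (eventually_nhdsGT_zero_mul_lt (1 / 2) hδs)).and (Ioo_mem_nhdsGT hε)).exists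
  refine ⟨min δ (r / 4), by positivity, fun x hx y hy h hh hd t => ?_⟩
  rw [mem_arc_neg_self hε.le]
  by_cases hXx : X x = 0
  · have hfix := (hφ.velocity_eq_zero_iff hvel hX hx).1 hXx
    have hxy : dist x (φ (h t) y) ≤ 0 := by
      simpa only [hfix, hXx, norm_zero, mul_zero] using hd t
    exact ⟨0, by simpa using hε.le, by simpa only [hfix] using dist_le_zero.1 hxy⟩
  · obtain ⟨g, hg, hgy, hdiam⟩ := hstar x hx y hy h hh fun t =>
      (hd t).trans (by gcongr; exact min_le_left _ _)
    have hdist : ∀ t, dist (φ t x) (φ (g t) x) < r / 2 * ‖X (φ t x)‖ := fun t => by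
      have hspeed : 0 < ‖X (φ t x)‖ := norm_pos_iff.2 (hφ.velocity_ne_zero hvel hX hx hXx t)
      rw [← hgy]
      refine (hd t).trans_lt ?_
      gcongr
      linarith [min_le_right δ (r / 4)]
    have hball := heff (r / 2) (by positivity) (by linarith) x hx
      (fun hfix => hXx ((hφ.velocity_eq_zero_iff hvel hX hx).2 hfix)) g hg hdist hdiam t
    have hshift : |g t - t| < r :=
      abs_sub_lt_of_image_subset_ball hX ((hvel x hx).isIntegralCurveOn _)
        (fun s _ => hφ.mapsTo s hx) hr hKr.le hball
    refine ⟨g t - t, hshift.le.trans hrε.le, ?_⟩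
    rw [← hφ.map_add_apply _ _ hx, sub_add_cancel, hgy]

end Expansiveness

end FlowOn

theorem rescaling_iff_starProperty_general {d : ℕ} {φ : ℝ → Euc d → Euc d}
    {X : Euc d → Euc d} {Λ : Set (Euc d)} {K : NNReal} (hφ : FlowOn φ Λ)
    (hvel : ∀ x ∈ Λ, IsIntegralCurve (φ · x) fun _ => X) (hX : LipschitzOnWith K X Λ)
    (hXΛ : Bornology.IsBounded (X '' Λ)) :
    (RescalingExpansive φ X Λ → StarProperty φ X Λ) ∧
    (Efficient φ X Λ → StarProperty φ X Λ → RescalingExpansive φ X Λ) :=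
  ⟨hφ.starProperty_of_rescalingExpansive hvel hX hXΛ,
    hφ.rescalingExpansive_of_efficient_of_starProperty hvel hX⟩

/-- Let `M ⊂ ℝ^d` be a compact C² manifold, `φ` a flow on `M` with
C¹ velocity field `X`, and `Λ ⊆ M` a compact `φ`-invariant subset whose fixed
points are all dynamically isolated. If `φ|Λ` is rescaling expansive then property
(*) holds; conversely, if `φ|Λ` is efficient and satisfies (*), then `φ|Λ` is
rescaling expansive. -/
theorem rescaling_iff_starProperty {d : ℕ}
    (φ : ℝ → Euc d → Euc d) (X : Euc d → Euc d) (M Λ : Set (Euc d))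
    (hMc : IsCompact M) (hflow : FlowOn φ M) (hX : ContDiff ℝ 1 X)
    (hvel : ∀ x ∈ M, ∀ t : ℝ, HasDerivAt (fun s : ℝ => φ s x) (X (φ t x)) t)
    (hΛM : Λ ⊆ M) (hΛc : IsCompact Λ) (hΛinv : ∀ t : ℝ, Set.MapsTo (φ t) Λ Λ)
    (hiso : ∀ σ ∈ fixOn φ Λ, DynIsolated φ Λ σ) :
    (RescalingExpansive φ X Λ → StarProperty φ X Λ) ∧
    (Efficient φ X Λ → StarProperty φ X Λ → RescalingExpansive φ X Λ) := by
  obtain ⟨K, hK⟩ := hX.locallyLipschitz.locallyLipschitzOn.exists_lipschitzOnWith_of_compact hΛc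
  exact rescaling_iff_starProperty_general (hflow.mono hΛM hΛinv) (fun x hx => hvel x (hΛM hx)) hK
    (hΛc.image hX.continuous).isBounded
end
end

section
/- Let M ⊂ ℝ^d be a compact C² manifold, φ a flow on M with C¹ velocity field X such that every fixed point of φ is hyperbolic, and Λ ⊂ M a compact φ-invariant subset. If φ|Λ is k*-expansive then φ|Λ is rescaling expansive. -/
open Metric Set Function

noncomputable section

/-- `φ|Λ` is k*-expansive: for all `ε > 0` there is `δ > 0` such that if `x, y ∈ Λ`,
`h ∈ H⁺₀(ℝ)` and `dist (φ_t x) (φ_{h t} y) ≤ δ` for all `t`, then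
`φ_{h t₀} y ∈ φ_{[-ε,ε]} (φ_{t₀} x)` for some `t₀`. -/
def KStarExpansiveOn {α : Type*} [MetricSpace α] (φ : ℝ → α → α) (Λ : Set α) : Prop :=
  ∀ ε > (0 : ℝ), ∃ δ > (0 : ℝ), ∀ x ∈ Λ, ∀ y ∈ Λ, ∀ h : ℝ → ℝ, IsHplus0 h →
    (∀ t : ℝ, dist (φ t x) (φ (h t) y) ≤ δ) →
    ∃ t₀ : ℝ, φ (h t₀) y ∈ arc φ (φ t₀ x) (-ε) ε

/-- A fixed point `σ` is hyperbolic: the (complexified) derivative `d_σX` has no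
eigenvalue with zero real part. -/
def HyperbolicFixed {d : ℕ} (X : Euc d → Euc d) (σ : Euc d) : Prop :=
  ∀ μ : ℂ, Module.End.HasEigenvalue
      (LinearMap.baseChange ℂ (fderiv ℝ X σ).toLinearMap) μ → μ.re ≠ 0

/-!
Where `X` is `K`-Lipschitz, an orbit leaves a regular point `z` almost linearly for a time depending
only on `K`: `‖φ_s z - z‖ ≥ |s| / 2 * ‖X z‖` as long as `K * |s| ≤ 1 / 3`. This scale is uniform,
also near the fixed points.

If `φ_{h t} y` is `δ‖X (φ_t x)‖`-close to `φ_t x` for all `t` and `δ` is small, then k*-expansivity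
puts `y` on the orbit of `x`, so that `φ_{h t} y = φ_{g t} (φ_t x)` for a continuous time lag `g`
that is small at one time. By the displacement estimate the lag can never take values between `2δ`
and the uniform scale, so by continuity it stays small forever.
-/

/-- Rescaling expansivity of `φ` on `Λ`, with velocity field `X`, in an arbitrary normed space; over
`Euc d` it unfolds to `RescalingExpansive`. -/
def RescalingExpansiveOn {E : Type*} [NormedAddCommGroup E] (φ : ℝ → E → E) (X : E → E)
    (Λ : Set E) : Prop :=
  ∀ ε > (0 : ℝ), ∃ δ > (0 : ℝ), ∀ x ∈ Λ, ∀ y ∈ Λ, ∀ h : ℝ → ℝ, IsHplus0 h →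
    (∀ t : ℝ, dist (φ t x) (φ (h t) y) ≤ δ * ‖X (φ t x)‖) →
    ∀ t : ℝ, φ (h t) y ∈ arc φ (φ t x) (-ε) ε

theorem arc_subset_arc {α : Type*} (φ : ℝ → α → α) (x : α) {a b c d : ℝ} (h : uIcc a b ⊆ uIcc c d) :
    arc φ x a b ⊆ arc φ x c d :=
  image_mono h

theorem forall_le_of_continuous_of_le_imp_le {α β : Type*} [TopologicalSpace α]
    [PreconnectedSpace α] [LinearOrder β] [TopologicalSpace β] [OrderClosedTopology β]
    {f : α → β} (hf : Continuous f) {a : α} {η r : β} (hηr : η < r) (ha : f a ≤ η)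
    (hgap : ∀ b, f b ≤ r → f b ≤ η) (b : α) : f b ≤ η := by
  refine hgap b (le_of_not_ge fun hb => ?_)
  obtain ⟨c, hc⟩ := mem_range_of_exists_le_of_exists_ge hf ⟨a, ha.trans hηr.le⟩ ⟨b, hb⟩
  exact (hηr.trans_eq hc.symm).not_ge (hgap c hc.le)

section IntegralCurve

variable {E : Type*} [NormedAddCommGroup E] [NormedSpace ℝ E] {X : E → E} {S : Set E} {K : NNReal}
  {u : ℝ → E} {a b : ℝ}

theorem norm_sub_sub_smul_le_of_norm_sub_le (hX : LipschitzOnWith K X S)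
    (hu : IsIntegralCurveOn u (fun _ => X) (uIcc a b)) (huS : MapsTo u (uIcc a b) S) {m : ℝ}
    (hm : ∀ t ∈ uIcc a b, ‖u t - u a‖ ≤ m) :
    ‖u b - u a - (b - a) • X (u a)‖ ≤ K * m * |b - a| := by
  have hderiv : ∀ t ∈ uIcc a b, HasDerivWithinAt (fun t => u t - t • X (u a))
      (X (u t) - X (u a)) (uIcc a b) t := fun t ht => by
    simpa using (hu t ht).fun_sub ((hasDerivWithinAt_id t _).smul_const (X (u a)))
  have hbound : ∀ t ∈ uIcc a b, ‖X (u t) - X (u a)‖ ≤ K * m := fun t ht =>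
    (hX.norm_sub_le (huS ht) (huS left_mem_uIcc)).trans (by gcongr; exact hm t ht)
  have hmvt := (convex_uIcc a b).norm_image_sub_le_of_norm_hasDerivWithin_le hderiv hbound
    left_mem_uIcc right_mem_uIcc
  rwa [sub_sub_sub_comm, ← sub_smul, Real.norm_eq_abs] at hmvt

theorem norm_sub_le_mul_abs_of_lipschitzOnWith (hX : LipschitzOnWith K X S)
    (hu : IsIntegralCurveOn u (fun _ => X) (uIcc a b)) (huS : MapsTo u (uIcc a b) S)
    (hK : K * |b - a| ≤ 1 / 3) {t : ℝ} (ht : t ∈ uIcc a b) :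
    ‖u t - u a‖ ≤ 3 / 2 * |b - a| * ‖X (u a)‖ := by
  obtain ⟨c, hc, hmax⟩ := isCompact_uIcc.exists_isMaxOn nonempty_uIcc
    (hu.continuousOn.sub continuousOn_const).norm
  have hle : ∀ s ∈ uIcc a b, ‖u s - u a‖ ≤ ‖u c - u a‖ := fun s hs => hmax hs
  have hsub : uIcc a c ⊆ uIcc a b := uIcc_subset_uIcc_left hc
  have hca : |c - a| ≤ |b - a| := abs_sub_left_of_mem_uIcc hc
  have hmain : ‖u c - u a‖ ≤ |b - a| * ‖X (u a)‖ + 1 / 3 * ‖u c - u a‖ :=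
    calc ‖u c - u a‖
        ≤ ‖(c - a) • X (u a)‖ + ‖u c - u a - (c - a) • X (u a)‖ := norm_le_norm_add_norm_sub' _ _
      _ ≤ |c - a| * ‖X (u a)‖ + K * ‖u c - u a‖ * |c - a| := by
          rw [norm_smul, Real.norm_eq_abs]
          gcongr
          exact norm_sub_sub_smul_le_of_norm_sub_le hX (hu.mono hsub) (huS.mono_left hsub)
            fun s hs => hle s (hsub hs)
      _ ≤ |b - a| * ‖X (u a)‖ + K * ‖u c - u a‖ * |b - a| := by gcongr
      _ = |b - a| * ‖X (u a)‖ + K * |b - a| * ‖u c - u a‖ := by ring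
      _ ≤ |b - a| * ‖X (u a)‖ + 1 / 3 * ‖u c - u a‖ := by gcongr
  linarith [hle t ht]

theorem abs_div_two_mul_norm_le_norm_sub (hX : LipschitzOnWith K X S)
    (hu : IsIntegralCurveOn u (fun _ => X) (uIcc a b)) (huS : MapsTo u (uIcc a b) S)
    (hK : K * |b - a| ≤ 1 / 3) :
    |b - a| / 2 * ‖X (u a)‖ ≤ ‖u b - u a‖ := by
  have hlin : ‖u b - u a - (b - a) • X (u a)‖ ≤ |b - a| / 2 * ‖X (u a)‖ :=
    calc ‖u b - u a - (b - a) • X (u a)‖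
        ≤ K * (3 / 2 * |b - a| * ‖X (u a)‖) * |b - a| :=
          norm_sub_sub_smul_le_of_norm_sub_le hX hu huS fun _ ht =>
            norm_sub_le_mul_abs_of_lipschitzOnWith hX hu huS hK ht
      _ = K * |b - a| * (3 / 2 * |b - a| * ‖X (u a)‖) := by ring
      _ ≤ 1 / 3 * (3 / 2 * |b - a| * ‖X (u a)‖) := by gcongr
      _ = |b - a| / 2 * ‖X (u a)‖ := by ring
  have htri : |b - a| * ‖X (u a)‖ ≤ ‖u b - u a‖ + ‖u b - u a - (b - a) • X (u a)‖ := by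
    rw [← Real.norm_eq_abs, ← norm_smul]
    exact norm_le_norm_add_norm_sub _ _
  linarith

end IntegralCurve

namespace FlowOn

theorem mono_of_mapsTo {α : Type*} [TopologicalSpace α] {φ : ℝ → α → α} {M Λ : Set α}
    (hφ : FlowOn φ M) (hΛM : Λ ⊆ M) (hΛ : ∀ t, MapsTo (φ t) Λ Λ) : FlowOn φ Λ :=
  ⟨hφ.1.mono (prod_mono_right hΛM), hΛ, fun x hx => hφ.2.2.1 x (hΛM hx),
    fun s t x hx => hφ.2.2.2 s t x (hΛM hx)⟩

theorem apply_eq_of_apply_eq {α : Type*} [TopologicalSpace α] {φ : ℝ → α → α} {Λ : Set α}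
    (hφ : FlowOn φ Λ) {x y : α} (hx : x ∈ Λ) (hy : y ∈ Λ) {a b s : ℝ}
    (h : φ a y = φ s (φ b x)) (t u : ℝ) :
    φ t y = φ (t - a - (u - b) + s) (φ u x) := by
  obtain ⟨-, -, -, hadd⟩ := hφ
  rw [← sub_add_cancel t a, hadd _ _ y hy, h, ← hadd _ _ x hx, ← hadd _ _ x hx, ← hadd _ _ x hx]
  congr 1
  ring

variable {E : Type*} [NormedAddCommGroup E] [NormedSpace ℝ E] {φ : ℝ → E → E} {X : E → E}
  {Λ : Set E} {K : NNReal}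

theorem apply_eq_self_of_velocity_eq_zero (hφ : FlowOn φ Λ) (hX : LipschitzOnWith K X Λ)
    {z : E} (hz : z ∈ Λ) (hvel : IsIntegralCurve (fun s => φ s z) fun _ => X) (hXz : X z = 0)
    (t : ℝ) : φ t z = z :=
  congrFun (ODE_solution_unique_univ (t₀ := 0) (g := fun _ => z) (fun _ => hX)
    (fun s => ⟨hvel s, hφ.2.1 s hz⟩) (fun s => ⟨by simpa [hXz] using hasDerivAt_const s z, hz⟩)
    (hφ.2.2.1 z hz)) t

theorem velocity_apply_ne_zero (hφ : FlowOn φ Λ) (hX : LipschitzOnWith K X Λ)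
    (hvel : ∀ x ∈ Λ, IsIntegralCurve (fun s => φ s x) fun _ => X) {x : E} (hx : x ∈ Λ)
    (hXx : X x ≠ 0) (t : ℝ) : X (φ t x) ≠ 0 := by
  intro hXt
  have htΛ : φ t x ∈ Λ := hφ.2.1 t hx
  have hfix : φ (-t) (φ t x) = φ t x :=
    hφ.apply_eq_self_of_velocity_eq_zero hX htΛ (hvel _ htΛ) hXt (-t)
  rw [← hφ.2.2.2 _ _ x hx, neg_add_cancel, hφ.2.2.1 x hx] at hfix
  exact hXx (hfix ▸ hXt)

theorem abs_le_of_dist_le_mul_norm_velocity (hφ : FlowOn φ Λ) (hX : LipschitzOnWith K X Λ)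
    {z : E} (hz : z ∈ Λ) (hvel : IsIntegralCurve (fun s => φ s z) fun _ => X) (hXz : X z ≠ 0)
    {s δ : ℝ} (hs : K * |s| ≤ 1 / 3) (hdist : dist z (φ s z) ≤ δ * ‖X z‖) : |s| ≤ 2 * δ := by
  have hdisp := abs_div_two_mul_norm_le_norm_sub (a := 0) (b := s) hX
    (hvel.isIntegralCurveOn _) (fun t _ => hφ.2.1 t hz) (by rwa [sub_zero])
  simp only [sub_zero, hφ.2.2.1 z hz] at hdisp
  rw [dist_comm, dist_eq_norm] at hdist
  linarith [le_of_mul_le_mul_right (hdisp.trans hdist) (norm_pos_iff.2 hXz)]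

theorem abs_lag_le (hφ : FlowOn φ Λ) (hX : LipschitzOnWith K X Λ)
    (hvel : ∀ x ∈ Λ, IsIntegralCurve (fun s => φ s x) fun _ => X) {x : E} (hx : x ∈ Λ)
    (hXx : X x ≠ 0) {g : ℝ → ℝ} (hg : Continuous g) {δ η r t₀ : ℝ} (hδη : 2 * δ ≤ η)
    (hηr : η < r) (hKr : K * r ≤ 1 / 3) (ht₀ : |g t₀| ≤ η)
    (hclose : ∀ t, dist (φ t x) (φ (g t) (φ t x)) ≤ δ * ‖X (φ t x)‖) (t : ℝ) : |g t| ≤ η := by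
  refine forall_le_of_continuous_of_le_imp_le hg.abs hηr ht₀ (fun s hs => ?_) t
  have hsΛ : φ s x ∈ Λ := hφ.2.1 s hx
  exact (hφ.abs_le_of_dist_le_mul_norm_velocity hX hsΛ (hvel _ hsΛ)
    (hφ.velocity_apply_ne_zero hX hvel hx hXx s)
    ((mul_le_mul_of_nonneg_left hs K.2).trans hKr) (hclose s)).trans hδη

theorem forall_mem_arc_of_mem_arc (hφ : FlowOn φ Λ) (hX : LipschitzOnWith K X Λ)
    (hvel : ∀ x ∈ Λ, IsIntegralCurve (fun s => φ s x) fun _ => X) {x y : E} (hx : x ∈ Λ)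
    (hy : y ∈ Λ) {h : ℝ → ℝ} (hh : Continuous h) {δ η r t₀ : ℝ} (hδη : 2 * δ ≤ η) (hη : 0 ≤ η)
    (hηr : η < r) (hKr : K * r ≤ 1 / 3) (ht₀ : φ (h t₀) y ∈ arc φ (φ t₀ x) (-η) η)
    (hclose : ∀ t, dist (φ t x) (φ (h t) y) ≤ δ * ‖X (φ t x)‖) (t : ℝ) :
    φ (h t) y ∈ arc φ (φ t x) (-η) η := by
  rw [arc, uIcc_of_le (neg_le_self hη)] at ht₀ ⊢
  by_cases hXx : X x = 0
  · have hfix := hφ.apply_eq_self_of_velocity_eq_zero hX hx (hvel x hx) hXx t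
    have heq : φ t x = φ (h t) y := dist_le_zero.1 (by simpa [hfix, hXx] using hclose t)
    exact ⟨0, by simpa using hη, (hφ.2.2.1 _ (hφ.2.1 t hx)).trans heq⟩
  · obtain ⟨s₀, hs₀, hs₀y⟩ := ht₀
    have hlag : ∀ t, φ (h t) y = φ (h t - h t₀ - (t - t₀) + s₀) (φ t x) := fun t =>
      hφ.apply_eq_of_apply_eq hx hy hs₀y.symm (h t) t
    have hsmall := hφ.abs_lag_le hX hvel hx hXx
      (g := fun t => h t - h t₀ - (t - t₀) + s₀) (by fun_prop) (t₀ := t₀) hδη hηr hKr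
      (by simpa using abs_le.2 hs₀) (fun t => hlag t ▸ hclose t) t
    exact ⟨_, abs_le.1 hsmall, (hlag t).symm⟩

end FlowOn

theorem kstar_imp_rescaling_of_hyperbolic_fixed_general {E : Type*} [NormedAddCommGroup E]
    [NormedSpace ℝ E] {φ : ℝ → E → E} {X : E → E} {Λ : Set E} {K : NNReal}
    (hφ : FlowOn φ Λ) (hX : LipschitzOnWith K X Λ) (hXb : Bornology.IsBounded (X '' Λ))
    (hvel : ∀ x ∈ Λ, IsIntegralCurve (fun s => φ s x) fun _ => X)
    (hks : KStarExpansiveOn φ Λ) : RescalingExpansiveOn φ X Λ := by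
  intro ε hε
  obtain ⟨r, hr, hKr⟩ : ∃ r : ℝ, 0 < r ∧ K * r < 1 / 3 :=
    exists_pos_mul_lt (by norm_num) (K : ℝ)
  obtain ⟨η, hη, hηlt⟩ := exists_between (lt_min hε hr)
  obtain ⟨hηε, hηr⟩ := lt_min_iff.1 hηlt
  obtain ⟨B, hB, hXB⟩ := hXb.exists_pos_norm_le
  obtain ⟨δ, hδ, hexp⟩ := hks η hη
  refine ⟨min (η / 2) (δ / B), by positivity, fun x hx y hy h hh hclose t => ?_⟩
  have hclose' : ∀ t, dist (φ t x) (φ (h t) y) ≤ δ := fun t =>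
    calc dist (φ t x) (φ (h t) y) ≤ min (η / 2) (δ / B) * ‖X (φ t x)‖ := hclose t
      _ ≤ δ / B * B := by
          gcongr
          exacts [min_le_right _ _, hXB _ (mem_image_of_mem X (hφ.2.1 t hx))]
      _ = δ := div_mul_cancel₀ _ hB.ne'
  obtain ⟨t₀, ht₀⟩ := hexp x hx y hy h hh hclose'
  refine arc_subset_arc φ _ ?_ (hφ.forall_mem_arc_of_mem_arc hX hvel hx hy hh.1.1
    (by linarith [min_le_left (η / 2) (δ / B)]) hη.le hηr hKr.le ht₀ hclose t)
  rw [uIcc_of_le (by linarith), uIcc_of_le (by linarith)]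
  exact Icc_subset_Icc (neg_le_neg hηε.le) hηε.le

/-- Let `M ⊂ ℝ^d` be a compact C² manifold, `φ` a flow on `M` with
C¹ velocity field `X` such that every fixed point of `φ` is hyperbolic, and
`Λ ⊆ M` a compact `φ`-invariant subset. If `φ|Λ` is k*-expansive then `φ|Λ` is
rescaling expansive. -/
theorem kstar_imp_rescaling_of_hyperbolic_fixed {d : ℕ}
    (φ : ℝ → Euc d → Euc d) (X : Euc d → Euc d) (M Λ : Set (Euc d))
    (hMc : IsCompact M) (hflow : FlowOn φ M) (hX : ContDiff ℝ 1 X)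
    (hvel : ∀ x ∈ M, ∀ t : ℝ, HasDerivAt (fun s : ℝ => φ s x) (X (φ t x)) t)
    (hhyp : ∀ σ ∈ fixOn φ M, HyperbolicFixed X σ)
    (hΛM : Λ ⊆ M) (hΛc : IsCompact Λ) (hΛinv : ∀ t : ℝ, Set.MapsTo (φ t) Λ Λ)
    (hks : KStarExpansiveOn φ Λ) :
    RescalingExpansive φ X Λ := by
  obtain ⟨K, hK⟩ := hX.locallyLipschitz.locallyLipschitzOn.exists_lipschitzOnWith_of_compact hΛc
  exact kstar_imp_rescaling_of_hyperbolic_fixed_general (hflow.mono_of_mapsTo hΛM hΛinv) hK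
    (hΛc.image hX.continuous).isBounded (fun x hx => hvel x (hΛM hx)) hks
end
end

section
/- Let φ be a flow on a compact C² manifold M ⊂ ℝ^d with C¹ velocity field X. If every fixed point of φ is dynamically isolated and the derivative d_σX is invertible for every σ ∈ fix(φ), then φ is efficient. -/
open Metric Set Function

noncomputable section

/-!
If `X` is `K`-Lipschitz on `M`, then over a time of length at most `1 / (4K)` the velocity along an
orbit changes by at most a third of its initial value. On such a time interval the orbit moves away
from its starting point monotonically and at least at two thirds of its initial speed. Hence, when
`δ` is small, `dist (φ_t x) (φ_{g(t)} x) < δ ‖X (φ_t x)‖` forces `|g(t) - t| < 2δ` as soon as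
`|g(t) - t| ≤ 2δ`; by continuity of `g`, either `|g(t) - t| < 2δ` for all `t` or
`2δ < |g(t) - t|` for all `t`. In the first case monotonicity gives the efficiency inclusion.
In the second, the velocity cannot be nearly constant along any `φ_{[t,g(t)]}(x)`, and since these
arcs are small the orbit is slow at all times. A slow orbit stays near `fix(φ)`, which is finite,
hence near a single fixed point, and dynamical isolation makes it that fixed point.
-/

section NearlyConstantVelocity

variable {E : Type*} [NormedAddCommGroup E] [NormedSpace ℝ E]
  {γ γ' : ℝ → E} {v : E} {ε : ℝ} {S : Set ℝ}

lemma norm_sub_sub_smul_le_of_norm_deriv_sub_le (hS : Convex ℝ S)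
    (hγ : ∀ s ∈ S, HasDerivWithinAt γ (γ' s) S s) (hv : ∀ s ∈ S, ‖γ' s - v‖ ≤ ε) {a b : ℝ}
    (ha : a ∈ S) (hb : b ∈ S) : ‖γ b - γ a - (b - a) • v‖ ≤ ε * |b - a| := by
  have hderiv : ∀ s ∈ S, HasDerivWithinAt (fun s => γ s - s • v) (γ' s - v) S s := fun s hs => by
    simpa using! (hγ s hs).sub ((hasDerivWithinAt_id s S).smul_const v)
  have h := hS.norm_image_sub_le_of_norm_hasDerivWithin_le hderiv hv ha hb
  rw [Real.norm_eq_abs] at h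
  convert h using 2
  module

lemma mul_abs_sub_le_norm_sub_of_norm_deriv_sub_le (hS : Convex ℝ S)
    (hγ : ∀ s ∈ S, HasDerivWithinAt γ (γ' s) S s) (hv : ∀ s ∈ S, ‖γ' s - v‖ ≤ ε) {a b : ℝ}
    (ha : a ∈ S) (hb : b ∈ S) : (‖v‖ - ε) * |b - a| ≤ ‖γ b - γ a‖ := by
  have herr := norm_sub_sub_smul_le_of_norm_deriv_sub_le hS hγ hv ha hb
  have htri := norm_sub_norm_le ((b - a) • v) (γ b - γ a)
  rw [norm_sub_rev ((b - a) • v), norm_smul, Real.norm_eq_abs] at htri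
  linarith

lemma norm_sub_le_norm_sub_of_norm_deriv_sub_le {t T s : ℝ}
    (hγ : ∀ s ∈ uIcc t T, HasDerivWithinAt γ (γ' s) (uIcc t T) s)
    (hv : ∀ s ∈ uIcc t T, ‖γ' s - v‖ ≤ ε) (hε : 3 * ε ≤ ‖v‖) (hs : s ∈ uIcc t T) :
    ‖γ s - γ t‖ ≤ ‖γ T - γ t‖ := by
  rcases eq_or_ne s t with rfl | hst
  · simp only [sub_self, norm_zero, norm_nonneg]
  have hconv : Convex ℝ (uIcc t T) := convex_uIcc t T
  have hspeed := mul_abs_sub_le_norm_sub_of_norm_deriv_sub_le hconv hγ hv left_mem_uIcc hs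
  have herr₁ := norm_sub_sub_smul_le_of_norm_deriv_sub_le hconv hγ hv left_mem_uIcc hs
  have herr₂ := norm_sub_sub_smul_le_of_norm_deriv_sub_le hconv hγ hv hs right_mem_uIcc
  have hsplit : |s - t| + |T - s| = |T - t| := by
    simpa only [dist_eq_norm', Real.norm_eq_abs] using!
      dist_add_dist_of_mem_segment (segment_eq_uIcc t T ▸ hs)
  -- Eliminating `v` between the two first-order expansions compares the two displacements.
  have helim : (s - t) • (γ T - γ t) + ((T - s) • (γ s - γ t - (s - t) • v)
      - (s - t) • (γ T - γ s - (T - s) • v)) = (T - t) • (γ s - γ t) := by module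
  have hcompare : |T - t| * ‖γ s - γ t‖ ≤
      |s - t| * ‖γ T - γ t‖ + (|T - s| * (ε * |s - t|) + |s - t| * (ε * |T - s|)) := by
    rw [← Real.norm_eq_abs (T - t), ← norm_smul, ← helim]
    refine (norm_add_le _ _).trans (add_le_add (norm_smul _ _).le ((norm_sub_le _ _).trans ?_))
    rw [norm_smul, norm_smul, Real.norm_eq_abs, Real.norm_eq_abs]
    gcongr
  have hgain : |T - s| * (2 * ε * |s - t|) ≤ |T - s| * ‖γ s - γ t‖ := by
    gcongr
    refine hspeed.trans' ?_
    gcongr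
    linarith
  rw [← hsplit] at hcompare
  have hscaled : |s - t| * ‖γ s - γ t‖ ≤ |s - t| * ‖γ T - γ t‖ := by linarith
  exact le_of_mul_le_mul_left hscaled (abs_pos.2 (sub_ne_zero.2 hst))

end NearlyConstantVelocity

section IntegralCurve

variable {E : Type*} [NormedAddCommGroup E] [NormedSpace ℝ E]
  {X : E → E} {γ : ℝ → E} {M : Set E} {K : NNReal} {t s T δ : ℝ}

lemma one_sub_mul_norm_sub_le_of_lipschitzOnWith (hγ : ∀ s, HasDerivAt γ (X (γ s)) s)
    (hγM : ∀ s, γ s ∈ M) (hX : LipschitzOnWith K X M) :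
    (1 - K * |s - t|) * ‖γ s - γ t‖ ≤ |s - t| * ‖X (γ t)‖ := by
  have hcont : Continuous γ := continuous_iff_continuousAt.2 fun s => (hγ s).continuousAt
  obtain ⟨m, hm, hmax⟩ := isCompact_uIcc.exists_isMaxOn (nonempty_uIcc (a := t) (b := s))
    (f := fun u => ‖γ u - γ t‖) (by fun_prop)
  have hspeed : ∀ u ∈ uIcc t s, ‖X (γ u)‖ ≤ ‖X (γ t)‖ + K * ‖γ m - γ t‖ := fun u hu =>
    calc ‖X (γ u)‖ ≤ ‖X (γ t)‖ + ‖X (γ u) - X (γ t)‖ := norm_le_norm_add_norm_sub' _ _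
      _ ≤ ‖X (γ t)‖ + K * ‖γ u - γ t‖ := by gcongr; exact hX.norm_sub_le (hγM u) (hγM t)
      _ ≤ ‖X (γ t)‖ + K * ‖γ m - γ t‖ := by gcongr _ + K * ?_; exact hmax hu
  have hdisp : ‖γ m - γ t‖ ≤ (‖X (γ t)‖ + K * ‖γ m - γ t‖) * |s - t| :=
    ((convex_uIcc t s).norm_image_sub_le_of_norm_hasDerivWithin_le
      (fun u _ => (hγ u).hasDerivWithinAt) hspeed left_mem_uIcc hm).trans <| by
        gcongr
        exact abs_sub_left_of_mem_uIcc hm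
  rcases le_total 0 (1 - K * |s - t|) with h | h
  · calc (1 - K * |s - t|) * ‖γ s - γ t‖
        ≤ (1 - K * |s - t|) * ‖γ m - γ t‖ := by gcongr; exact hmax right_mem_uIcc
      _ ≤ |s - t| * ‖X (γ t)‖ := by linarith
  · exact (mul_nonpos_of_nonpos_of_nonneg h (norm_nonneg _)).trans (by positivity)

lemma norm_velocity_sub_le_of_mul_abs_sub_le (hγ : ∀ s, HasDerivAt γ (X (γ s)) s)
    (hγM : ∀ s, γ s ∈ M) (hX : LipschitzOnWith K X M) (hT : K * |T - t| ≤ 1 / 4)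
    (hs : s ∈ uIcc t T) : ‖X (γ s) - X (γ t)‖ ≤ ‖X (γ t)‖ / 3 := by
  have hshort : K * |s - t| ≤ 1 / 4 := hT.trans' <| by
    gcongr K * ?_
    exact abs_sub_left_of_mem_uIcc hs
  have hdisp : K * ((1 - K * |s - t|) * ‖γ s - γ t‖) ≤ K * (|s - t| * ‖X (γ t)‖) := by
    gcongr K * ?_
    exact one_sub_mul_norm_sub_le_of_lipschitzOnWith hγ hγM hX
  have hlhs : 3 / 4 * (K * ‖γ s - γ t‖) ≤ (1 - K * |s - t|) * (K * ‖γ s - γ t‖) := by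
    gcongr
    linarith
  have hrhs : K * |s - t| * ‖X (γ t)‖ ≤ 1 / 4 * ‖X (γ t)‖ := by gcongr
  exact (hX.norm_sub_le (hγM s) (hγM t)).trans (by linarith)

lemma norm_sub_le_norm_sub_of_mul_abs_sub_le (hγ : ∀ s, HasDerivAt γ (X (γ s)) s)
    (hγM : ∀ s, γ s ∈ M) (hX : LipschitzOnWith K X M) (hT : K * |T - t| ≤ 1 / 4)
    (hs : s ∈ uIcc t T) : ‖γ s - γ t‖ ≤ ‖γ T - γ t‖ :=
  norm_sub_le_norm_sub_of_norm_deriv_sub_le (fun u _ => (hγ u).hasDerivWithinAt)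
    (fun _ hu => norm_velocity_sub_le_of_mul_abs_sub_le hγ hγM hX hT hu)
    (mul_div_cancel₀ ‖X (γ t)‖ three_ne_zero).le hs

lemma abs_sub_lt_of_norm_velocity_sub_le (hγ : ∀ s, HasDerivAt γ (X (γ s)) s)
    (hv : ∀ s ∈ uIcc t T, ‖X (γ s) - X (γ t)‖ ≤ ‖X (γ t)‖ / 3)
    (hclose : ‖γ T - γ t‖ < δ * ‖X (γ t)‖) : |T - t| < 2 * δ := by
  have hδ : 0 < δ := pos_of_mul_pos_left ((norm_nonneg _).trans_lt hclose) (norm_nonneg _)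
  have hspeed := mul_abs_sub_le_norm_sub_of_norm_deriv_sub_le (convex_uIcc t T)
    (fun s _ => (hγ s).hasDerivWithinAt) hv left_mem_uIcc right_mem_uIcc
  have hlt : 2 / 3 * |T - t| * ‖X (γ t)‖ < δ * ‖X (γ t)‖ := by linarith
  linarith [lt_of_mul_lt_mul_right hlt (norm_nonneg _)]

lemma norm_velocity_lt_of_le_abs_sub {c : ℝ} (hγ : ∀ s, HasDerivAt γ (X (γ s)) s)
    (hγM : ∀ s, γ s ∈ M) (hX : LipschitzOnWith K X M)
    (hsmall : ∀ s ∈ uIcc t T, K * ‖γ s - γ t‖ ≤ c / 3)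
    (hclose : ‖γ T - γ t‖ < δ * ‖X (γ t)‖) (hfar : 2 * δ ≤ |T - t|) : ‖X (γ t)‖ < c := by
  by_contra! hfast
  refine hfar.not_gt (abs_sub_lt_of_norm_velocity_sub_le hγ (fun s hs => ?_) hclose)
  calc ‖X (γ s) - X (γ t)‖ ≤ K * ‖γ s - γ t‖ := hX.norm_sub_le (hγM s) (hγM t)
    _ ≤ c / 3 := hsmall s hs
    _ ≤ ‖X (γ t)‖ / 3 := by gcongr

lemma forall_abs_sub_lt_or_forall_lt_abs_sub {g : ℝ → ℝ} (hγ : ∀ s, HasDerivAt γ (X (γ s)) s)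
    (hγM : ∀ s, γ s ∈ M) (hX : LipschitzOnWith K X M) (hδ : K * (2 * δ) ≤ 1 / 4)
    (hg : Continuous g) (hclose : ∀ t, ‖γ (g t) - γ t‖ < δ * ‖X (γ t)‖) :
    (∀ t, |g t - t| < 2 * δ) ∨ ∀ t, 2 * δ < |g t - t| := by
  have hne : ∀ t, |g t - t| ≠ 2 * δ := fun t ht =>
    (abs_sub_lt_of_norm_velocity_sub_le hγ (fun _ hs =>
      norm_velocity_sub_le_of_mul_abs_sub_le hγ hγM hX (ht ▸ hδ) hs) (hclose t)).ne ht
  by_contra! ⟨⟨a, ha⟩, b, hb⟩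
  obtain ⟨u, hu⟩ :=
    mem_range_of_exists_le_of_exists_ge (hg.sub continuous_id).abs ⟨b, hb⟩ ⟨a, ha⟩
  exact hne u hu

end IntegralCurve

lemma exists_subset_of_isPreconnected_of_pairwiseDisjoint {α ι : Type*} [TopologicalSpace α]
    {S : Set α} {I : Set ι} {V : ι → Set α} (hS : IsPreconnected S) (hne : S.Nonempty)
    (hV : ∀ i, IsOpen (V i)) (hdisj : I.PairwiseDisjoint V) (hsub : S ⊆ ⋃ i ∈ I, V i) :
    ∃ i ∈ I, S ⊆ V i := by
  obtain ⟨x, hx⟩ := hne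
  obtain ⟨i, hi, hxi⟩ := mem_iUnion₂.1 (hsub hx)
  refine ⟨i, hi, hS.subset_left_of_subset_union (hV i)
    (isOpen_biUnion fun j (_ : j ∈ I \ {i}) => hV j)
    (disjoint_iUnion₂_right.2 fun j hj => hdisj hi hj.1 (Ne.symm hj.2)) ?_ ⟨x, hx, hxi⟩⟩
  rwa [← biUnion_insert, insert_sdiff_singleton, insert_eq_of_mem hi]

section DynIsolated

variable {α : Type*} [MetricSpace α] {φ : ℝ → α → α} {M : Set α}

lemma isClosed_fixOn (hM : IsClosed M) (hφ : FlowOn φ M) : IsClosed (fixOn φ M) := by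
  have hcont : ∀ t, ContinuousOn (φ t) M := fun t =>
    hφ.1.comp (f := fun x => (t, x)) (by fun_prop) fun x hx => ⟨mem_univ t, hx⟩
  have hfix : fixOn φ M = ⋂ t, {x ∈ M | φ t x = x} := by
    ext x
    simp only [fixOn, mem_ofPred_eq, mem_iInter, forall_and, forall_const]
  rw [hfix]
  exact isClosed_iInter fun t => hM.isClosed_eq (hcont t) continuousOn_id

lemma finite_fixOn_of_dynIsolated (hM : IsCompact M) (hφ : FlowOn φ M)
    (hiso : ∀ σ ∈ fixOn φ M, DynIsolated φ M σ) : (fixOn φ M).Finite := by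
  have hcompact : IsCompact (fixOn φ M) :=
    hM.of_isClosed_subset (isClosed_fixOn hM.isClosed hφ) (sep_subset _ _)
  refine hcompact.finite (IsDiscrete.of_nhdsWithin fun σ hσ => Filter.le_pure_iff.2 ?_)
  obtain ⟨r, hr, hball⟩ := hiso σ hσ
  filter_upwards [self_mem_nhdsWithin, mem_nhdsWithin_of_mem_nhds (ball_mem_nhds σ hr)]
    with τ hτ hτσ
  refine hball τ hτ.1 (range_subset_iff.2 fun t => ?_)
  rwa [hτ.2 t]

lemma exists_isOpen_fixOn_subset_of_dynIsolated (hM : IsCompact M) (hφ : FlowOn φ M)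
    (hiso : ∀ σ ∈ fixOn φ M, DynIsolated φ M σ) :
    ∃ U, IsOpen U ∧ fixOn φ M ⊆ U ∧ ∀ x ∈ M, orb φ x ⊆ U → x ∈ fixOn φ M := by
  obtain ⟨V, hV, hdisj⟩ := (finite_fixOn_of_dynIsolated hM hφ hiso).t2_separation
  choose! r hr hball using hiso
  refine ⟨⋃ σ ∈ fixOn φ M, V σ ∩ ball σ (r σ),
    isOpen_biUnion fun σ _ => (hV σ).2.inter isOpen_ball,
    fun σ hσ => mem_biUnion hσ ⟨(hV σ).1, mem_ball_self (hr σ hσ)⟩, fun x hx horb => ?_⟩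
  have hcont : Continuous fun t => φ t x :=
    hφ.1.comp_continuous (f := fun t => (t, x)) (by fun_prop) fun t => ⟨mem_univ t, hx⟩
  obtain ⟨σ, hσ, hsub⟩ := exists_subset_of_isPreconnected_of_pairwiseDisjoint
    (isPreconnected_range hcont) (range_nonempty _) (fun σ => (hV σ).2.inter isOpen_ball)
    (hdisj.mono_on fun σ _ => inter_subset_left) horb
  rwa [hball σ hσ x hx (hsub.trans inter_subset_right)]

end DynIsolated

section Efficiency

variable {E : Type*} [NormedAddCommGroup E] {φ : ℝ → E → E} {X : E → E} {M : Set E}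

/-- Efficiency of the restriction to `Λ` of a flow `φ` with velocity field `X`, for flows on subsets
of an arbitrary normed space; on `Euc d` this is `Efficient`. -/
def EfficientOn (φ : ℝ → E → E) (X : E → E) (Λ : Set E) : Prop :=
  ∃ δs > (0 : ℝ), ∀ δ : ℝ, 0 < δ → δ < δs → ∀ x ∈ Λ, (¬ ∀ t : ℝ, φ t x = x) →
    ∀ g : ℝ → ℝ, IsHplus g →
    (∀ t : ℝ, dist (φ t x) (φ (g t) x) < δ * ‖X (φ t x)‖) →
    (∀ t : ℝ, Metric.diam (arc φ x t (g t)) < δs) →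
    ∀ t : ℝ, arc φ x t (g t) ⊆ Metric.ball (φ t x) (δ * ‖X (φ t x)‖)

variable [NormedSpace ℝ E]

lemma mem_fixOn_of_velocity_eq_zero {K : NNReal} (hφ : FlowOn φ M) (hX : LipschitzOnWith K X M)
    (hvel : ∀ x ∈ M, ∀ t : ℝ, HasDerivAt (fun s : ℝ => φ s x) (X (φ t x)) t)
    {σ : E} (hσ : σ ∈ M) (h0 : X σ = 0) : σ ∈ fixOn φ M := by
  have hconst : (fun s => φ s σ) = fun _ => σ :=
    ODE_solution_unique_univ (v := fun _ => X) (s := fun _ => M) (K := K) (t₀ := 0)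
      (fun _ => hX) (fun s => ⟨hvel σ hσ s, hφ.2.1 s hσ⟩)
      (fun s => ⟨h0 ▸ hasDerivAt_const s σ, hσ⟩) (hφ.2.2.1 σ hσ)
  exact ⟨hσ, congrFun hconst⟩

lemma exists_pos_forall_norm_velocity_lt_mem_fixOn {K : NNReal} (hM : IsCompact M)
    (hφ : FlowOn φ M) (hX : LipschitzOnWith K X M)
    (hvel : ∀ x ∈ M, ∀ t : ℝ, HasDerivAt (fun s : ℝ => φ s x) (X (φ t x)) t)
    (hiso : ∀ σ ∈ fixOn φ M, DynIsolated φ M σ) :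
    ∃ c > 0, ∀ x ∈ M, (∀ t, ‖X (φ t x)‖ < c) → x ∈ fixOn φ M := by
  obtain ⟨U, hU, hfixU, htrap⟩ := exists_isOpen_fixOn_subset_of_dynIsolated hM hφ hiso
  obtain ⟨c, hc, hbound⟩ := (hM.diff hU).exists_forall_le'
    (hX.continuousOn.norm.mono sdiff_subset) (a := 0) fun y hy =>
      norm_pos_iff.2 fun h0 => hy.2 (hfixU (mem_fixOn_of_velocity_eq_zero hφ hX hvel hy.1 h0))
  refine ⟨c, hc, fun x hx hslow => htrap x hx (range_subset_iff.2 fun t => ?_)⟩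
  by_contra hnot
  exact (hslow t).not_ge (hbound _ ⟨hφ.2.1 t hx, hnot⟩)

theorem efficient_of_dynIsolated_invertible_general (hM : IsCompact M) (hφ : FlowOn φ M)
    (hX : LocallyLipschitzOn M X)
    (hvel : ∀ x ∈ M, ∀ t : ℝ, HasDerivAt (fun s : ℝ => φ s x) (X (φ t x)) t)
    (hiso : ∀ σ ∈ fixOn φ M, DynIsolated φ M σ) : EfficientOn φ X M := by
  obtain ⟨K, hK, hlip⟩ : ∃ K > 0, LipschitzOnWith K X M :=
    let ⟨K, hK⟩ := hX.exists_lipschitzOnWith_of_compact hM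
    ⟨K + 1, by positivity, hK.weaken le_self_add⟩
  obtain ⟨c, hc, hslow⟩ := exists_pos_forall_norm_velocity_lt_mem_fixOn hM hφ hlip hvel hiso
  refine ⟨min (1 / (8 * K)) (c / (3 * K)), by positivity, ?_⟩
  intro δ _ hδs x hx hnfix g hg hdist hdiam
  have hxM : ∀ t, φ t x ∈ M := fun t => hφ.2.1 t hx
  have hclose : ∀ t, ‖φ (g t) x - φ t x‖ < δ * ‖X (φ t x)‖ := fun t => by
    simpa only [dist_eq_norm'] using hdist t
  have hKδ : K * (2 * δ) ≤ 1 / 4 := by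
    have hlt := (lt_div_iff₀ (by positivity)).1 (hδs.trans_le (min_le_left _ _))
    linarith
  rcases forall_abs_sub_lt_or_forall_lt_abs_sub (hvel x hx) hxM hlip hKδ hg.1 hclose
    with hnear | hfar
  · rintro t _ ⟨s, hs, rfl⟩
    rw [mem_ball, dist_eq_norm]
    have hshort : K * |g t - t| ≤ 1 / 4 := hKδ.trans' (by gcongr; exact (hnear t).le)
    exact (norm_sub_le_norm_sub_of_mul_abs_sub_le (hvel x hx) hxM hlip hshort hs).trans_lt
      (hclose t)
  · refine absurd (hslow x hx fun t => ?_).2 hnfix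
    refine norm_velocity_lt_of_le_abs_sub (hvel x hx) hxM hlip (fun s hs => ?_) (hclose t)
      (hfar t).le
    have hbdd : Bornology.IsBounded (arc φ x t (g t)) :=
      hM.isBounded.subset (image_subset_iff.2 fun u _ => hxM u)
    have hle := dist_le_diam_of_mem hbdd (mem_image_of_mem _ hs) (mem_image_of_mem _ left_mem_uIcc)
    have hlt := (lt_div_iff₀ (by positivity)).1
      (hle.trans_lt ((hdiam t).trans_le (min_le_right _ _)))
    rw [dist_eq_norm] at hlt
    linarith

end Efficiency

/-- Let `φ` be a flow on a compact C² manifold `M ⊂ ℝ^d` with C¹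
velocity field `X`. If every fixed point of `φ` is dynamically isolated and the
derivative `d_σX` is invertible for every `σ ∈ fix(φ)`, then `φ` is efficient. -/
theorem efficient_of_dynIsolated_invertible {d : ℕ}
    (φ : ℝ → Euc d → Euc d) (X : Euc d → Euc d) (M : Set (Euc d))
    (hMc : IsCompact M) (hflow : FlowOn φ M) (hX : ContDiff ℝ 1 X)
    (hvel : ∀ x ∈ M, ∀ t : ℝ, HasDerivAt (fun s : ℝ => φ s x) (X (φ t x)) t)
    (hiso : ∀ σ ∈ fixOn φ M, DynIsolated φ M σ)
    (hinv : ∀ σ ∈ fixOn φ M, IsUnit (fderiv ℝ X σ)) :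
    Efficient φ X M :=
  efficient_of_dynIsolated_invertible_general hMc hflow hX.locallyLipschitz.locallyLipschitzOn hvel
    hiso
end
end
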